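/- Skew-orthogonality of the spherical skew-orthogonal polynomials (content of Lemma 3.1 and equation (3.8)). Let N ≥ 1 and n ≥ N be integers and L ≥ 0 a real number. Define q_{2k+1}(ζ) := ζ^{2k+1} and q_{2k}(ζ) := (Γ(k+L+1)/Γ(k−n+1/2)) ∑_{l=0}^{k} (−1)^{k−l} (Γ(l−n+1/2)/Γ(l+L+1)) ζ^{2l}. Then for all integers 0 ≤ k, l ≤ N−1: ⟨q_{2k}, q_{2l}⟩_s = 0, ⟨q_{2k+1}, q_{2l+1}⟩_s = 0, and ⟨q_{2k}, q_{2l+1}⟩_s = δ_{k,l} · 2·Γ(2k+2L+2)·Γ(2n−2k)/Γ(2n+2L+2), where δ_{k,l} is the Kronecker delta. -/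

import Mathlib

open MeasureTheory Filter Finset

noncomputable section

namespace SI

/-- The weight `w(ζ) = |ζ|^{4L}(1+|ζ|²)^{-2(n+L+1)}`. -/
def wfun (n L : ℝ) (ζ : ℂ) : ℝ :=
  ‖ζ‖ ^ (4*L) * (1 + ‖ζ‖ ^ 2) ^ (-(2*(n+L+1)))

/-- The skew-symmetric form `⟨f,g⟩_s` (the factor `π⁻¹` accounts for `dA = d²ζ/π`). -/
def skewForm (n L : ℝ) (f g : ℂ → ℂ) : ℂ :=
  (Real.pi : ℂ)⁻¹ * ∫ ζ : ℂ,
    (f ζ * g ((starRingEnd ℂ) ζ) - g ζ * f ((starRingEnd ℂ) ζ)) *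
      (ζ - (starRingEnd ℂ) ζ) * ((wfun n L ζ : ℝ) : ℂ)

/-- The odd skew-orthogonal polynomial `q_{2k+1}(ζ) = ζ^{2k+1}`. -/
def qodd (k : ℕ) (ζ : ℂ) : ℂ := ζ ^ (2*k+1)

/-- The even skew-orthogonal polynomial `q_{2k}`. -/
def qeven (n L : ℝ) (k : ℕ) (ζ : ℂ) : ℂ :=
  (Complex.Gamma ((k+L+1 : ℝ) : ℂ) / Complex.Gamma ((k-n+1/2 : ℝ) : ℂ)) *
    ∑ l ∈ range (k+1), (-1:ℂ)^(k-l) *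
      (Complex.Gamma ((l-n+1/2 : ℝ) : ℂ) / Complex.Gamma ((l+L+1 : ℝ) : ℂ)) * ζ ^ (2*l)

/-!
The substitution `ζ ↦ -ζ` changes the sign of the form on two even or two odd functions, which
settles the pairings of equal parity. Since the weight is radial, the moments `∫ ζᵃ ζ̄ᵇ w dA` vanish
for `a ≠ b`, and for `a = b` they are beta integrals `h_a` in the variable `|ζ|²`. Hence
`⟨ζ²ⁱ, ζ²ˡ⁺¹⟩_s` is `2 h_{2l+1}` for `i = l`, `-2 h_{2l+2}` for `i = l + 1` and zero otherwise. So
only two terms of `q_{2k} = ∑ cᵢ ζ²ⁱ` can meet `ζ²ˡ⁺¹`, and for `l < k` they cancel because the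
coefficients solve `c_l h_{2l+1} = c_{l+1} h_{2l+2}`.
-/

open ProbabilityTheory (beta)

open scoped ComplexConjugate

section BetaIntegral

variable {u v : ℝ}

lemma beta_integrand_ofReal {x : ℝ} (hx : x ∈ Set.Ioc (0 : ℝ) 1) :
    (x : ℂ) ^ ((u : ℂ) - 1) * (1 - (x : ℂ)) ^ ((v : ℂ) - 1) =
      ((x ^ (u - 1) * (1 - x) ^ (v - 1) : ℝ) : ℂ) := by
  rw [Complex.ofReal_mul, Complex.ofReal_cpow hx.1.le, Complex.ofReal_cpow (sub_nonneg.2 hx.2)]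
  push_cast
  rfl

lemma integrableOn_Ioo_beta_integrand (hu : 0 < u) (hv : 0 < v) :
    IntegrableOn (fun x : ℝ => x ^ (u - 1) * (1 - x) ^ (v - 1)) (Set.Ioo 0 1) := by
  have hconv := Complex.betaIntegral_convergent (u := u) (v := v) (by simpa) (by simpa)
  rw [intervalIntegrable_iff_integrableOn_Ioc_of_le zero_le_one,
    integrableOn_congr_fun (fun x hx => beta_integrand_ofReal hx) measurableSet_Ioc] at hconv
  exact (Integrable.re hconv).mono_measure (Measure.restrict_mono_set _ Set.Ioo_subset_Ioc_self)

lemma integral_Ioo_beta_integrand (hu : 0 < u) (hv : 0 < v) :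
    ∫ x in Set.Ioo (0 : ℝ) 1, x ^ (u - 1) * (1 - x) ^ (v - 1) = beta u v := by
  rw [ProbabilityTheory.beta_eq_betaIntegralReal u v hu hv, Complex.betaIntegral,
    intervalIntegral.integral_of_le zero_le_one,
    setIntegral_congr_fun measurableSet_Ioc fun x hx => beta_integrand_ofReal hx,
    integral_complex_ofReal, Complex.ofReal_re, integral_Ioc_eq_integral_Ioo]

lemma mul_beta_add_one_left (hu : u ≠ 0) (hv : v ≠ 0) :
    v * beta (u + 1) v = u * beta u (v + 1) := by
  rw [beta, beta, Real.Gamma_add_one hu, Real.Gamma_add_one hv, add_right_comm u 1 v, add_assoc]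
  ring

lemma image_div_one_add_Ioi : (fun t : ℝ => t / (1 + t)) '' Set.Ioi 0 = Set.Ioo 0 1 := by
  ext x
  constructor
  · rintro ⟨t, ht : 0 < t, rfl⟩
    exact ⟨by positivity, (div_lt_one (by positivity)).2 (by linarith)⟩
  · rintro ⟨h0, h1⟩
    have hx : 0 < 1 - x := sub_pos.2 h1
    exact ⟨x / (1 - x), div_pos h0 hx, by field_simp; ring⟩

lemma injOn_div_one_add_Ioi : Set.InjOn (fun t : ℝ => t / (1 + t)) (Set.Ioi 0) := by
  intro s (hs : 0 < s) t (ht : 0 < t) hst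
  rw [div_eq_div_iff (by positivity) (by positivity)] at hst
  linarith

lemma hasDerivAt_div_one_add {t : ℝ} (ht : 1 + t ≠ 0) :
    HasDerivAt (fun t : ℝ => t / (1 + t)) ((1 + t) ^ 2)⁻¹ t := by
  refine ((hasDerivAt_id t).div ((hasDerivAt_id t).const_add 1) ht).congr_deriv ?_
  simp [div_eq_mul_inv]

lemma beta_integrand_comp_div_one_add {t : ℝ} (ht : 0 < t) :
    |((1 + t) ^ 2)⁻¹| • ((t / (1 + t)) ^ (u - 1) * (1 - t / (1 + t)) ^ (v - 1)) =
      t ^ (u - 1) * (1 + t) ^ (-(u + v)) := by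
  have hp : 0 < 1 + t := by positivity
  have hcompl : 1 - t / (1 + t) = (1 + t)⁻¹ := by field_simp; ring
  have hexp : -(u + v) = -((2 : ℕ) : ℝ) + (-(u - 1) + -(v - 1)) := by push_cast; ring
  rw [hcompl, abs_of_pos (by positivity), smul_eq_mul, hexp, Real.rpow_add hp, Real.rpow_add hp,
    Real.rpow_neg hp.le, Real.rpow_natCast, Real.div_rpow ht.le hp.le, Real.inv_rpow hp.le,
    ← Real.rpow_neg hp.le (v - 1), div_eq_mul_inv, ← Real.rpow_neg hp.le (u - 1)]
  ring

lemma integrableOn_Ioi_rpow_mul_one_add_rpow (hu : 0 < u) (hv : 0 < v) :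
    IntegrableOn (fun t : ℝ => t ^ (u - 1) * (1 + t) ^ (-(u + v))) (Set.Ioi 0) := by
  have h := integrableOn_Ioo_beta_integrand hu hv
  rw [← image_div_one_add_Ioi, integrableOn_image_iff_integrableOn_abs_deriv_smul measurableSet_Ioi
    (fun t (ht : 0 < t) => (hasDerivAt_div_one_add (by positivity)).hasDerivWithinAt)
    injOn_div_one_add_Ioi] at h
  exact h.congr_fun (fun t ht => beta_integrand_comp_div_one_add ht) measurableSet_Ioi

lemma integral_Ioi_rpow_mul_one_add_rpow (hu : 0 < u) (hv : 0 < v) :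
    ∫ t in Set.Ioi (0 : ℝ), t ^ (u - 1) * (1 + t) ^ (-(u + v)) = beta u v := by
  rw [← integral_Ioo_beta_integrand hu hv, ← image_div_one_add_Ioi,
    integral_image_eq_integral_abs_deriv_smul measurableSet_Ioi
      (fun t (ht : 0 < t) => (hasDerivAt_div_one_add (by positivity)).hasDerivWithinAt)
      injOn_div_one_add_Ioi]
  exact setIntegral_congr_fun measurableSet_Ioi fun t ht =>
    (beta_integrand_comp_div_one_add ht).symm

end BetaIntegral

section PlaneIntegral

variable {F : Type*} [NormedAddCommGroup F] [NormedSpace ℝ F]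

lemma integrable_comp_norm_sq_iff {g : ℝ → F} :
    Integrable (fun ζ : ℂ => g (‖ζ‖ ^ 2)) ↔ IntegrableOn g (Set.Ioi 0) := by
  rw [integrable_fun_norm_addHaar volume (f := fun r => g (r ^ 2)), Complex.finrank_real_complex,
    ← integrableOn_Ioi_comp_rpow_iff' g two_ne_zero]
  norm_num

lemma integral_comp_norm_sq (g : ℝ → F) :
    ∫ ζ : ℂ, g (‖ζ‖ ^ 2) = Real.pi • ∫ t in Set.Ioi (0 : ℝ), g t := by
  rw [integral_fun_norm_addHaar volume (fun r => g (r ^ 2)), Complex.finrank_real_complex,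
    ← integral_comp_rpow_Ioi_of_pos (g := g) two_pos]
  have hball : volume.real (Metric.ball (0 : ℂ) 1) = Real.pi := by
    simp [Measure.real, Complex.volume_ball]
  simp only [mul_smul, integral_smul]
  rw [hball, ← Nat.cast_smul_eq_nsmul ℝ, smul_comm]
  norm_num

lemma integral_pow_mul_conj_pow_mul_comp_norm {a b : ℕ} (hab : a ≠ b) (φ : ℝ → ℂ) :
    ∫ ζ : ℂ, ζ ^ a * conj ζ ^ b * φ ‖ζ‖ = 0 := by
  let c : Circle := Circle.exp (Real.pi / (a - b))
  have hc : (c : ℂ) ^ a * conj (c : ℂ) ^ b = -1 := by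
    have hab' : (a : ℂ) - b ≠ 0 := sub_ne_zero.2 (by exact_mod_cast hab)
    rw [← Circle.coe_inv_eq_conj, ← Circle.exp_neg, Circle.coe_exp, Circle.coe_exp,
      ← Complex.exp_nat_mul, ← Complex.exp_nat_mul, ← Complex.exp_add, ← Complex.exp_pi_mul_I]
    congr 1
    push_cast
    field_simp
    ring
  have hrot : ∫ ζ : ℂ, ζ ^ a * conj ζ ^ b * φ ‖ζ‖ = -∫ ζ : ℂ, ζ ^ a * conj ζ ^ b * φ ‖ζ‖ := by
    rw [← integral_neg, ← (rotation c).measurePreserving.integral_comp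
      (rotation c).toHomeomorph.measurableEmbedding]
    refine integral_congr_ae (Eventually.of_forall fun ζ => ?_)
    simp only [rotation_apply, map_mul, norm_mul, Circle.norm_coe, one_mul, mul_pow]
    linear_combination ζ ^ a * conj ζ ^ b * φ ‖ζ‖ * hc
  exact self_eq_neg.1 hrot

end PlaneIntegral

section Moments

variable {n L : ℝ}

lemma wfun_eq_comp_norm_sq (n L : ℝ) (ζ : ℂ) :
    wfun n L ζ = (‖ζ‖ ^ 2) ^ (2 * L) * (1 + ‖ζ‖ ^ 2) ^ (-(2 * (n + L + 1))) := by
  rw [wfun, ← Real.rpow_natCast_mul (norm_nonneg ζ)]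
  norm_num [← mul_assoc]

lemma rpow_mul_weight_eq (s : ℝ) {t : ℝ} (ht : 0 < t) :
    t ^ s * (t ^ (2 * L) * (1 + t) ^ (-(2 * (n + L + 1)))) =
      t ^ (s + 2 * L + 1 - 1) * (1 + t) ^ (-((s + 2 * L + 1) + (2 * n - s + 1))) := by
  rw [← mul_assoc, ← Real.rpow_add ht]
  ring_nf

lemma integrable_norm_sq_rpow_mul_wfun {s : ℝ} (h₀ : 0 < s + 2 * L + 1) (h₁ : 0 < 2 * n - s + 1) :
    Integrable fun ζ : ℂ => (‖ζ‖ ^ 2) ^ s * wfun n L ζ := by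
  simp only [wfun_eq_comp_norm_sq]
  rw [integrable_comp_norm_sq_iff
    (g := fun t => t ^ s * (t ^ (2 * L) * (1 + t) ^ (-(2 * (n + L + 1)))))]
  exact (integrableOn_Ioi_rpow_mul_one_add_rpow h₀ h₁).congr_fun
    (fun t ht => (rpow_mul_weight_eq s ht).symm) measurableSet_Ioi

lemma integral_norm_sq_rpow_mul_wfun {s : ℝ} (h₀ : 0 < s + 2 * L + 1) (h₁ : 0 < 2 * n - s + 1) :
    ∫ ζ : ℂ, (‖ζ‖ ^ 2) ^ s * wfun n L ζ = Real.pi * beta (s + 2 * L + 1) (2 * n - s + 1) := by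
  simp only [wfun_eq_comp_norm_sq]
  rw [integral_comp_norm_sq fun t => t ^ s * (t ^ (2 * L) * (1 + t) ^ (-(2 * (n + L + 1)))),
    setIntegral_congr_fun measurableSet_Ioi fun t ht => rpow_mul_weight_eq s ht,
    integral_Ioi_rpow_mul_one_add_rpow h₀ h₁, smul_eq_mul]

lemma wfun_nonneg (n L : ℝ) (ζ : ℂ) : 0 ≤ wfun n L ζ := by
  unfold wfun
  positivity

lemma measurable_wfun (n L : ℝ) : Measurable (wfun n L) := by
  unfold wfun
  fun_prop

lemma integrable_pow_mul_conj_pow_mul_wfun {a b : ℕ} (h₀ : 0 < a + b + 4 * L + 2)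
    (h₁ : a + b < 4 * n + 2) :
    Integrable fun ζ : ℂ => ζ ^ a * conj ζ ^ b * (wfun n L ζ : ℂ) := by
  refine (integrable_norm_sq_rpow_mul_wfun (n := n) (L := L) (s := (a + b) / 2) (by linarith)
    (by linarith)).mono' ?_ (Eventually.of_forall fun ζ => ?_)
  · have hw := measurable_wfun n L
    have hconj : Measurable fun ζ : ℂ => conj ζ := Complex.continuous_conj.measurable
    exact Measurable.aestronglyMeasurable (by fun_prop)
  · have hpow : (‖ζ‖ ^ 2) ^ (((a : ℝ) + b) / 2) = ‖ζ‖ ^ a * ‖ζ‖ ^ b := by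
      rw [← Real.rpow_natCast_mul (norm_nonneg ζ), ← pow_add, ← Real.rpow_natCast ‖ζ‖ (a + b)]
      push_cast
      ring_nf
    simp only [norm_mul, norm_pow, RCLike.norm_conj, Complex.norm_real,
      Real.norm_of_nonneg (wfun_nonneg n L ζ), hpow, le_refl]

/-- The moment `∫ ζᵃ ζ̄ᵇ w(ζ) dA(ζ)` of the weight, with `dA = d²ζ/π`. -/
def moment (n L : ℝ) (a b : ℕ) : ℂ :=
  (Real.pi : ℂ)⁻¹ * ∫ ζ : ℂ, ζ ^ a * conj ζ ^ b * (wfun n L ζ : ℂ)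

lemma moment_of_ne {a b : ℕ} (hab : a ≠ b) : moment n L a b = 0 := by
  rw [moment, mul_eq_zero]
  exact .inr (integral_pow_mul_conj_pow_mul_comp_norm hab
    fun r => ((r ^ (4 * L) * (1 + r ^ 2) ^ (-(2 * (n + L + 1))) : ℝ) : ℂ))

lemma moment_self {a : ℕ} (h₀ : 0 < a + 2 * L + 1) (h₁ : 0 < 2 * n - a + 1) :
    moment n L a a = (beta (a + 2 * L + 1) (2 * n - a + 1) : ℂ) := by
  have hreal (ζ : ℂ) : ζ ^ a * conj ζ ^ a * (wfun n L ζ : ℂ) =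
      (((‖ζ‖ ^ 2) ^ (a : ℝ) * wfun n L ζ : ℝ) : ℂ) := by
    rw [← mul_pow, Complex.mul_conj', Real.rpow_natCast]
    push_cast
    rfl
  simp only [moment, hreal]
  rw [integral_complex_ofReal, integral_norm_sq_rpow_mul_wfun h₀ h₁, Complex.ofReal_mul,
    inv_mul_cancel_left₀ (Complex.ofReal_ne_zero.2 Real.pi_ne_zero)]

lemma moment_self_succ {a : ℕ} (h₀ : 0 < a + 2 * L + 1) (h₁ : a < 2 * n) :
    (2 * n - a) * moment n L (a + 1) (a + 1) = (a + 2 * L + 1) * moment n L a a := by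
  have hbeta := mul_beta_add_one_left h₀.ne' (sub_pos.2 h₁).ne'
  rw [moment_self (by push_cast; linarith) (by push_cast; linarith),
    moment_self h₀ (by linarith),
    show ((a + 1 : ℕ) : ℝ) + 2 * L + 1 = a + 2 * L + 1 + 1 by push_cast; ring,
    show 2 * n - ((a + 1 : ℕ) : ℝ) + 1 = 2 * n - a by push_cast; ring]
  exact_mod_cast hbeta

end Moments

section SkewForm

variable {n L : ℝ}

/-- The integrand of `skewForm n L f g`. -/
def skewIntegrand (n L : ℝ) (f g : ℂ → ℂ) (ζ : ℂ) : ℂ :=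
  (f ζ * g (conj ζ) - g ζ * f (conj ζ)) * (ζ - conj ζ) * (wfun n L ζ : ℂ)

lemma skewForm_eq_integral (f g : ℂ → ℂ) :
    skewForm n L f g = (Real.pi : ℂ)⁻¹ * ∫ ζ : ℂ, skewIntegrand n L f g ζ := rfl

lemma skewForm_comp_neg (f g : ℂ → ℂ) :
    skewForm n L (fun ζ => f (-ζ)) (fun ζ => g (-ζ)) = -skewForm n L f g := by
  rw [skewForm_eq_integral, skewForm_eq_integral, ← mul_neg, ← integral_neg,
    ← integral_neg_eq_self (fun ζ => -skewIntegrand n L f g ζ)]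
  congr 2 with ζ
  simp only [skewIntegrand, wfun, map_neg, norm_neg]
  ring

lemma skewForm_eq_zero_of_even {f g : ℂ → ℂ} (hf : f.Even) (hg : g.Even) :
    skewForm n L f g = 0 := by
  have h := skewForm_comp_neg (n := n) (L := L) f g
  simp only [hf.eq, hg.eq] at h
  exact self_eq_neg.1 h

lemma skewForm_eq_zero_of_odd {f g : ℂ → ℂ} (hf : f.Odd) (hg : g.Odd) :
    skewForm n L f g = 0 := by
  have h := skewForm_comp_neg (n := n) (L := L) f g
  simp only [hf.eq, hg.eq, skewForm, neg_mul_neg] at h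
  exact self_eq_neg.1 h

lemma skewForm_sum_mul_left {ι : Type*} {s : Finset ι} {f : ι → ℂ → ℂ} {g : ℂ → ℂ} (c : ι → ℂ)
    (hf : ∀ i ∈ s, Integrable (skewIntegrand n L (f i) g)) :
    skewForm n L (fun ζ => ∑ i ∈ s, c i * f i ζ) g = ∑ i ∈ s, c i * skewForm n L (f i) g := by
  have hsum : skewIntegrand n L (fun ζ => ∑ i ∈ s, c i * f i ζ) g =
      fun ζ => ∑ i ∈ s, c i * skewIntegrand n L (f i) g ζ := by
    funext ζ
    simp only [skewIntegrand, sum_mul, mul_sum, ← sum_sub_distrib]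
    exact sum_congr rfl fun i _ => by ring
  simp only [skewForm_eq_integral]
  rw [hsum, integral_finsetSum _ fun i hi => (hf i hi).const_mul _, mul_sum]
  exact sum_congr rfl fun i _ => by rw [integral_const_mul, mul_left_comm]

lemma skewIntegrand_pow_pow (a b : ℕ) :
    skewIntegrand n L (· ^ a) (· ^ b) =
      ((fun ζ => ζ ^ (a + 1) * conj ζ ^ b * (wfun n L ζ : ℂ)) -
        (fun ζ => ζ ^ a * conj ζ ^ (b + 1) * (wfun n L ζ : ℂ))) -
      ((fun ζ => ζ ^ (b + 1) * conj ζ ^ a * (wfun n L ζ : ℂ)) -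
        fun ζ => ζ ^ b * conj ζ ^ (a + 1) * (wfun n L ζ : ℂ)) := by
  funext ζ
  simp only [skewIntegrand, Pi.sub_apply]
  ring

lemma integrable_skewIntegrand_pow_pow {a b : ℕ} (h₀ : 0 < a + b + 4 * L + 3)
    (h₁ : a + b < 4 * n + 1) : Integrable (skewIntegrand n L (· ^ a) (· ^ b)) := by
  rw [skewIntegrand_pow_pow]
  refine .sub (.sub ?_ ?_) (.sub ?_ ?_) <;>
    exact integrable_pow_mul_conj_pow_mul_wfun (by push_cast; linarith) (by push_cast; linarith)

lemma skewForm_pow_pow {a b : ℕ} (h₀ : 0 < a + b + 4 * L + 3) (h₁ : a + b < 4 * n + 1) :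
    skewForm n L (· ^ a) (· ^ b) =
      (moment n L (a + 1) b - moment n L a (b + 1)) -
        (moment n L (b + 1) a - moment n L b (a + 1)) := by
  have hint {c d : ℕ} (h : c + d = a + b + 1) :
      Integrable fun ζ : ℂ => ζ ^ c * conj ζ ^ d * (wfun n L ζ : ℂ) := by
    have h' : (c + d : ℝ) = a + b + 1 := by exact_mod_cast h
    exact integrable_pow_mul_conj_pow_mul_wfun (by linarith) (by linarith)
  have hab := hint (c := a + 1) (d := b) (by ring)
  have hab' := hint (c := a) (d := b + 1) (by ring)
  have hba := hint (c := b + 1) (d := a) (by ring)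
  have hba' := hint (c := b) (d := a + 1) (by ring)
  simp only [skewForm_eq_integral, skewIntegrand_pow_pow, moment]
  rw [integral_sub' (hab.sub hab') (hba.sub hba'), integral_sub' hab hab',
    integral_sub' hba hba']
  ring

lemma skewForm_even_pow_odd_pow {i l : ℕ} (h₀ : 0 < i + l + 2 * L + 2) (h₁ : i + l < 2 * n) :
    skewForm n L (· ^ (2 * i)) (· ^ (2 * l + 1)) =
      (if i = l then 2 * moment n L (2 * l + 1) (2 * l + 1) else 0) -
        if i = l + 1 then 2 * moment n L (2 * l + 2) (2 * l + 2) else 0 := by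
  rw [skewForm_pow_pow (by push_cast; linarith) (by push_cast; linarith)]
  rcases eq_or_ne i l with rfl | hil
  · rw [moment_of_ne (a := 2 * i) (by omega), moment_of_ne (b := 2 * i) (by omega),
      if_pos rfl, if_neg (by omega)]
    ring
  rcases eq_or_ne i (l + 1) with rfl | hil'
  · rw [moment_of_ne (a := 2 * (l + 1) + 1) (by omega),
      moment_of_ne (b := 2 * (l + 1) + 1) (by omega),
      if_neg (by omega), if_pos rfl]
    ring_nf
  · rw [moment_of_ne (by omega), moment_of_ne (by omega), moment_of_ne (by omega),
      moment_of_ne (by omega), if_neg hil, if_neg hil']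
    ring

end SkewForm

section SkewOrthogonalPolynomials

variable {n L : ℝ} {k l : ℕ}

/-- The coefficient of `ζ ^ (2 * l)` in the even skew-orthogonal polynomial `q_{2k}` (for `l ≤ k`;
the subtraction in the sign is truncated). -/
def evenCoeff (n L : ℝ) (k l : ℕ) : ℂ :=
  Complex.Gamma ((k + L + 1 : ℝ) : ℂ) / Complex.Gamma ((k - n + 1 / 2 : ℝ) : ℂ) *
    ((-1) ^ (k - l) *
      (Complex.Gamma ((l - n + 1 / 2 : ℝ) : ℂ) / Complex.Gamma ((l + L + 1 : ℝ) : ℂ)))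

lemma qeven_eq_sum (n L : ℝ) (k : ℕ) :
    qeven n L k = fun ζ => ∑ l ∈ range (k + 1), evenCoeff n L k l * ζ ^ (2 * l) := by
  funext ζ
  simp only [qeven, evenCoeff, mul_sum, mul_assoc]

lemma qeven_even (n L : ℝ) (k : ℕ) : (qeven n L k).Even := fun ζ => by
  simp only [qeven, (even_two_mul _).neg_pow]

lemma qodd_odd (k : ℕ) : (qodd k).Odd := fun ζ => (odd_two_mul_add_one k).neg_pow ζ

lemma Gamma_natCast_add_ne_zero (hL : -1 < L) (k : ℕ) :
    Complex.Gamma ((k + L + 1 : ℝ) : ℂ) ≠ 0 := by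
  rw [Complex.Gamma_ofReal, Complex.ofReal_ne_zero]
  exact (Real.Gamma_pos_of_pos (by linarith [k.cast_nonneg (α := ℝ)])).ne'

lemma Gamma_natCast_sub_add_half_ne_zero (hn : ∀ m : ℕ, n ≠ m + 1 / 2) (k : ℕ) :
    Complex.Gamma ((k - n + 1 / 2 : ℝ) : ℂ) ≠ 0 := by
  rw [Complex.Gamma_ofReal, Complex.ofReal_ne_zero]
  refine Real.Gamma_ne_zero fun m hm => hn (k + m) ?_
  push_cast
  linarith

lemma natCast_ne_natCast_add_half (m j : ℕ) : (m : ℝ) ≠ j + 1 / 2 := by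
  intro h
  have hdouble : (2 * m : ℝ) = 2 * j + 1 := by linarith
  have hparity : 2 * m = 2 * j + 1 := by exact_mod_cast hdouble
  omega

lemma evenCoeff_self (hL : -1 < L) (hn : ∀ m : ℕ, n ≠ m + 1 / 2) (k : ℕ) :
    evenCoeff n L k k = 1 := by
  rw [evenCoeff, Nat.sub_self, pow_zero, one_mul,
    div_mul_div_cancel₀ (Gamma_natCast_sub_add_half_ne_zero hn k),
    div_self (Gamma_natCast_add_ne_zero hL k)]

lemma evenCoeff_succ (hL : -1 < L) (hn : n ≠ l + 1 / 2) (hlk : l < k) :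
    (l + L + 1) * evenCoeff n L k (l + 1) = (n - l - 1 / 2) * evenCoeff n L k l := by
  have hpos : 0 < l + L + 1 := by linarith [l.cast_nonneg (α := ℝ)]
  have hne : ((l + L + 1 : ℝ) : ℂ) ≠ 0 := Complex.ofReal_ne_zero.2 hpos.ne'
  have hnum : Complex.Gamma (((l + 1 : ℕ) - n + 1 / 2 : ℝ) : ℂ) =
      (l - n + 1 / 2 : ℝ) * Complex.Gamma ((l - n + 1 / 2 : ℝ) : ℂ) := by
    rw [← Complex.Gamma_add_one _ (Complex.ofReal_ne_zero.2 fun h => hn (by linarith))]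
    push_cast
    ring_nf
  have hden : Complex.Gamma (((l + 1 : ℕ) + L + 1 : ℝ) : ℂ) =
      (l + L + 1 : ℝ) * Complex.Gamma ((l + L + 1 : ℝ) : ℂ) := by
    rw [← Complex.Gamma_add_one _ hne]
    push_cast
    ring_nf
  have hsign : (-1 : ℂ) ^ (k - l) = -(-1) ^ (k - (l + 1)) := by
    rw [show k - l = k - (l + 1) + 1 by omega, pow_succ, mul_neg_one]
  have hΓ := Gamma_natCast_add_ne_zero hL l
  rw [evenCoeff, evenCoeff, hnum, hden, hsign]
  push_cast at hne hΓ ⊢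
  field_simp
  ring

lemma evenCoeff_mul_moment_succ (hL : -1 < L) (hlk : l < k) (hkn : k < n) :
    evenCoeff n L k (l + 1) * moment n L (2 * l + 2) (2 * l + 2) =
      evenCoeff n L k l * moment n L (2 * l + 1) (2 * l + 1) := by
  have hln : (l : ℝ) + 1 < n := lt_of_le_of_lt (by exact_mod_cast hlk) hkn
  have hcoeff := evenCoeff_succ (n := n) hL (by linarith) hlk
  have hmoment := moment_self_succ (n := n) (L := L) (a := 2 * l + 1)
    (by push_cast; linarith [l.cast_nonneg (α := ℝ)]) (by push_cast; linarith)
  have hne : ((2 * n - 2 * l - 1 : ℝ) : ℂ) ≠ 0 := Complex.ofReal_ne_zero.2 (by linarith)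
  refine mul_left_cancel₀ hne ?_
  push_cast at hmoment ⊢
  linear_combination evenCoeff n L k (l + 1) * hmoment +
    2 * moment n L (2 * l + 1) (2 * l + 1) * hcoeff

lemma skewForm_qeven_qodd (hL : -1 < L) (hk : k < n) (hl : l < n) :
    skewForm n L (qeven n L k) (qodd l) =
      (if l ≤ k then 2 * (evenCoeff n L k l * moment n L (2 * l + 1) (2 * l + 1)) else 0) -
        if l < k then 2 * (evenCoeff n L k (l + 1) * moment n L (2 * l + 2) (2 * l + 2))
        else 0 := by
  have hpos (i : ℕ) : 0 < i + l + 2 * L + 2 := by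
    linarith [i.cast_nonneg (α := ℝ), l.cast_nonneg (α := ℝ)]
  have hlt {i : ℕ} (hi : i ∈ range (k + 1)) : i + l < 2 * n := by
    have hik : (i : ℝ) ≤ k := by exact_mod_cast mem_range_succ_iff.1 hi
    linarith
  have hterm : ∀ i ∈ range (k + 1),
      evenCoeff n L k i * skewForm n L (· ^ (2 * i)) (qodd l) =
        (if i = l then 2 * (evenCoeff n L k i * moment n L (2 * l + 1) (2 * l + 1)) else 0) -
          if i = l + 1 then 2 * (evenCoeff n L k i * moment n L (2 * l + 2) (2 * l + 2))
          else 0 := by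
    intro i hi
    unfold qodd
    rw [skewForm_even_pow_odd_pow (hpos i) (hlt hi), mul_sub, mul_ite, mul_ite, mul_zero]
    simp only [mul_left_comm]
  rw [qeven_eq_sum, skewForm_sum_mul_left, sum_congr rfl hterm, sum_sub_distrib, sum_ite_eq',
    sum_ite_eq']
  · simp only [mem_range, Nat.lt_succ_iff, Nat.succ_le_iff]
  · intro i hi
    exact integrable_skewIntegrand_pow_pow (by push_cast; linarith [hpos i])
      (by push_cast; linarith [hlt hi])

lemma skewForm_qeven_qodd_of_ne (hL : -1 < L) (hk : k < n) (hl : l < n) (hkl : k ≠ l) :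
    skewForm n L (qeven n L k) (qodd l) = 0 := by
  rw [skewForm_qeven_qodd hL hk hl]
  rcases hkl.lt_or_gt with hkl | hlk
  · rw [if_neg hkl.not_ge, if_neg hkl.not_gt, sub_zero]
  · rw [if_pos hlk.le, if_pos hlk, evenCoeff_mul_moment_succ hL hlk hk, sub_self]

lemma skewForm_qeven_qodd_self (hL : -1 < L) (hn : ∀ m : ℕ, n ≠ m + 1 / 2) (hk : k < n) :
    skewForm n L (qeven n L k) (qodd k) =
      2 * Complex.Gamma ((2 * k + 2 * L + 2 : ℝ) : ℂ) * Complex.Gamma ((2 * n - 2 * k : ℝ) : ℂ) /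
        Complex.Gamma ((2 * n + 2 * L + 2 : ℝ) : ℂ) := by
  rw [skewForm_qeven_qodd hL hk hk, if_pos le_rfl, if_neg (lt_irrefl k), sub_zero,
    evenCoeff_self hL hn, one_mul,
    moment_self (by push_cast; linarith [k.cast_nonneg (α := ℝ)]) (by push_cast; linarith), beta]
  simp only [Complex.Gamma_ofReal]
  push_cast
  ring_nf

end SkewOrthogonalPolynomials

theorem skew_orthogonality_general (n L : ℝ) (hL : -1 < L) (hn : ∀ m : ℕ, n ≠ m + 1 / 2)
    (k l : ℕ) (hk : k < n) (hl : l < n) :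
    skewForm n L (qeven n L k) (qeven n L l) = 0 ∧
    skewForm n L (qodd k) (qodd l) = 0 ∧
    skewForm n L (qeven n L k) (qodd l) =
      (if k = l then
        2 * Complex.Gamma ((2 * k + 2 * L + 2 : ℝ) : ℂ) *
            Complex.Gamma ((2 * n - 2 * k : ℝ) : ℂ) /
          Complex.Gamma ((2 * n + 2 * L + 2 : ℝ) : ℂ)
      else 0) := by
  refine ⟨skewForm_eq_zero_of_even (qeven_even n L k) (qeven_even n L l),
    skewForm_eq_zero_of_odd (qodd_odd k) (qodd_odd l), ?_⟩
  split_ifs with hkl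
  · subst hkl
    exact skewForm_qeven_qodd_self hL hn hk
  · exact skewForm_qeven_qodd_of_ne hL hk hl hkl

/-- Lemma 3.1 and equation (3.8): skew-orthogonality of the spherical
skew-orthogonal polynomials. -/
theorem skew_orthogonality (N n : ℕ) (L : ℝ) (hN : 1 ≤ N) (hn : N ≤ n) (hL : 0 ≤ L)
    (k l : ℕ) (hk : k ≤ N-1) (hl : l ≤ N-1) :
    skewForm n L (qeven n L k) (qeven n L l) = 0 ∧
    skewForm n L (qodd k) (qodd l) = 0 ∧
    skewForm n L (qeven n L k) (qodd l) =
      (if k = l then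
        2 * Complex.Gamma ((2*k+2*L+2 : ℝ) : ℂ) * Complex.Gamma ((2*(n:ℝ)-2*k : ℝ) : ℂ) /
          Complex.Gamma ((2*(n:ℝ)+2*L+2 : ℝ) : ℂ)
      else 0) :=
  skew_orthogonality_general n L (by linarith) (natCast_ne_natCast_add_half n) k l
    (by exact_mod_cast (by omega : k < n)) (by exact_mod_cast (by omega : l < n))

end SI
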